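/- Logarithmic lower bound: Let w1, w2 ∈ ℝ² be linearly independent. There is a constant c > 0, depending only on w1 and w2, such that for every ε ∈ (0, 1/2) and every rectangle R ⊆ ℝ² with side lengths 1 and ε whose side of length 1 is parallel to w1 − w2, the principal value S_{(w1,w2)}(χ_R, χ_R)(x) exists for almost every x ∈ ℝ² and ∫_{ℝ²} |S_{(w1,w2)}(χ_R, χ_R)(x)| dx ≥ c · ε · log(1/ε). -/

import Mathlib

open MeasureTheory Filter Topology Set

noncomputable section

abbrev V2 : Type := ℝ × ℝ

def dot2 (x y : V2) : ℝ := x.1 * y.1 + x.2 * y.2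

/-- Rotation of a vector of ℝ² by +90 degrees. -/
def perp (u : V2) : V2 := (-u.2, u.1)

/-- The closed rectangle with corner `c`, unit side direction `u` (and `perp u`),
and side lengths `l1` (in direction `u`) and `l2`. -/
def rectSet (c u : V2) (l1 l2 : ℝ) : Set V2 :=
  {x | ∃ s t : ℝ, s ∈ Set.Icc 0 l1 ∧ t ∈ Set.Icc 0 l2 ∧ x = c + s • u + t • perp u}

/-- The `δ`-truncation of the directional bilinear Hilbert transform
`S_{(w₁,w₂)}(f,g)(x) = p.v.∫ f(x−tw₁) g(x−tw₂) dt/t`. -/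
def truncS (w1 w2 : V2) (f g : V2 → ℝ) (x : V2) (δ : ℝ) : ℝ :=
  ∫ t in {t : ℝ | δ < |t| ∧ |t| < δ⁻¹}, f (x - t • w1) * g (x - t • w2) / t

/-- `L` is the principal value `S_{(w₁,w₂)}(f,g)(x)`. -/
def SPV (w1 w2 : V2) (f g : V2 → ℝ) (x : V2) (L : ℝ) : Prop :=
  Filter.Tendsto (truncS w1 w2 f g x) (𝓝[>] (0 : ℝ)) (𝓝 L)

/-!
Both velocities have the same component `q` orthogonal to `w₁ - w₂`, since their difference is
parallel to a side of the rectangle. Seen from a point at height `s` above the middle of that side,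
with `s` at most a small multiple of its length, the two lines therefore enter the rectangle
simultaneously, at time `s / q`, and stay inside together at least until time `(s + η) / q`, where
`η` is comparable to the shorter side. The principal value there is at least
`∫ dt/t ≥ η / (s + η)`, and integrating this over the heights produces the logarithm.
-/

section PrincipalValue

/-- The domain of integration `δ < |t| < δ⁻¹` of the truncated integrals in `truncS`. -/
def truncation (δ : ℝ) : Set ℝ := {t | δ < |t| ∧ |t| < δ⁻¹}

/-- `L` is the principal value of `∫ φ(t) dt/t`, truncated at `0` and at `∞` simultaneously so that
`SPV` is the special case of the product of two functions restricted to lines. -/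
def HasPrincipalValue (φ : ℝ → ℝ) (L : ℝ) : Prop :=
  Tendsto (fun δ => ∫ t in truncation δ, φ t / t) (𝓝[>] 0) (𝓝 L)

variable {φ ψ : ℝ → ℝ} {L M : ℝ}

theorem measurableSet_truncation (δ : ℝ) : MeasurableSet (truncation δ) :=
  ((isOpen_lt continuous_const continuous_abs).inter
    (isOpen_lt continuous_abs continuous_const)).measurableSet

theorem aecover_truncation : AECover volume (𝓝[>] 0) truncation where
  ae_eventually_mem := by
    filter_upwards [Measure.ae_ne volume 0] with t ht
    have ht' : 0 < |t| := abs_pos.2 ht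
    filter_upwards [Ioo_mem_nhdsGT (lt_min ht' (inv_pos.2 ht'))] with δ hδ
    exact ⟨hδ.2.trans_le (min_le_left _ _),
      (lt_inv_comm₀ hδ.1 ht').1 (hδ.2.trans_le (min_le_right _ _))⟩
  measurableSet := measurableSet_truncation

theorem integrable_div_of_eq_zero_near_zero (hφ : Integrable φ) {r : ℝ} (hr : 0 < r)
    (h0 : ∀ t, |t| < r → φ t = 0) : Integrable fun t => φ t / t := by
  refine (hφ.div_const r).mono
    (hφ.aestronglyMeasurable.div₀ measurable_id.aestronglyMeasurable) (ae_of_all _ fun t => ?_)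
  rcases lt_or_ge |t| r with ht | ht
  · simp [h0 t ht]
  · rw [norm_div, norm_div, Real.norm_of_nonneg hr.le, Real.norm_eq_abs t]
    gcongr

theorem integrableOn_div_truncation (hφ : Integrable φ) {δ : ℝ} (hδ : 0 < δ) :
    IntegrableOn (fun t => φ t / t) (truncation δ) := by
  have hmeas := measurableSet_truncation δ
  have hint := integrable_div_of_eq_zero_near_zero (hφ.indicator hmeas) hδ fun t ht =>
    indicator_of_notMem (fun hmem => ht.not_gt hmem.1) φ
  exact hint.integrableOn.congr_fun (fun t ht => by simp only [indicator_of_mem ht]) hmeas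

theorem setIntegral_truncation_comp_neg (φ : ℝ → ℝ) (δ : ℝ) :
    ∫ t in truncation δ, φ (-t) / t = -∫ t in truncation δ, φ t / t := by
  have hmeas := measurableSet_truncation δ
  have hsymm (t : ℝ) : -t ∈ truncation δ ↔ t ∈ truncation δ := by simp [truncation]
  rw [← integral_indicator hmeas, ← integral_indicator hmeas, ← integral_neg,
    ← integral_neg_eq_self]
  refine integral_congr_ae (ae_of_all _ fun t => ?_)
  by_cases ht : t ∈ truncation δ <;> simp [indicator, hsymm, ht, div_neg]

namespace HasPrincipalValue

theorem unique (hL : HasPrincipalValue φ L) (hM : HasPrincipalValue φ M) : L = M :=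
  tendsto_nhds_unique hL hM

theorem of_integrable_div (hφ : Integrable fun t => φ t / t) :
    HasPrincipalValue φ (∫ t, φ t / t) :=
  aecover_truncation.integral_tendsto_of_countably_generated hφ

theorem comp_neg (hL : HasPrincipalValue φ L) : HasPrincipalValue (fun t => φ (-t)) (-L) := by
  simpa only [HasPrincipalValue, setIntegral_truncation_comp_neg] using Tendsto.neg hL

theorem zero_of_even (hφ : φ.Even) : HasPrincipalValue φ 0 := by
  have hzero (δ : ℝ) : ∫ t in truncation δ, φ t / t = 0 := by
    have hneg := setIntegral_truncation_comp_neg φ δ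
    simp only [hφ _] at hneg
    exact self_eq_neg.1 hneg
  simpa only [HasPrincipalValue, hzero] using tendsto_const_nhds

theorem add (hφ : Integrable φ) (hψ : Integrable ψ) (hL : HasPrincipalValue φ L)
    (hM : HasPrincipalValue ψ M) : HasPrincipalValue (φ + ψ) (L + M) := by
  refine (Tendsto.add hL hM).congr' ?_
  filter_upwards [self_mem_nhdsWithin] with δ hδ
  simp only [Pi.add_apply, add_div]
  exact (integral_add (integrableOn_div_truncation hφ hδ) (integrableOn_div_truncation hψ hδ)).symm

theorem exists_of_eventually_const (hφ : Integrable φ) {k : ℝ} (hk : ∀ᶠ t in 𝓝 0, φ t = k) :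
    ∃ L, HasPrincipalValue φ L := by
  -- Subtracting an even function removes the singularity and leaves the principal value unchanged.
  obtain ⟨r, hr, hrk⟩ := Metric.eventually_nhds_iff_ball.1 hk
  set χ : ℝ → ℝ := (Metric.ball 0 r).indicator fun _ => k with hχ
  have hχ_int : Integrable χ :=
    (integrable_indicator_iff Metric.isOpen_ball.measurableSet).2
      (integrableOn_const Metric.isBounded_ball.measure_lt_top.ne)
  have hχ_even : χ.Even := fun t => by simp [hχ, indicator]
  have hdiff : ∀ t, |t| < r → (φ - χ) t = 0 := fun t ht => by
    have hmem : t ∈ Metric.ball (0 : ℝ) r := by simpa using ht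
    simp [hχ, hmem, hrk t hmem]
  have hL := of_integrable_div (integrable_div_of_eq_zero_near_zero (hφ.sub hχ_int) hr hdiff)
  exact ⟨_, by simpa using (hL.add (hφ.sub hχ_int) hχ_int (zero_of_even hχ_even))⟩

end HasPrincipalValue

variable {T : Set ℝ}

theorem exists_hasPrincipalValue_indicator (hT : MeasurableSet T) (hfin : volume T ≠ ⊤)
    (h0 : (0 : ℝ) ∉ frontier T) : ∃ L, HasPrincipalValue (T.indicator fun _ => 1) L := by
  have hint : Integrable (T.indicator fun _ => (1 : ℝ)) :=
    (integrable_indicator_iff hT).2 (integrableOn_const hfin)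
  rw [frontier_eq_closure_inter_closure, mem_inter_iff, not_and_or, ← mem_compl_iff,
    ← mem_compl_iff, ← interior_compl, ← interior_compl, compl_compl, mem_interior_iff_mem_nhds,
    mem_interior_iff_mem_nhds] at h0
  rcases h0 with hout | hin
  · exact HasPrincipalValue.exists_of_eventually_const hint
      (mem_of_superset hout fun t ht => indicator_of_notMem ht _)
  · exact HasPrincipalValue.exists_of_eventually_const hint
      (mem_of_superset hin fun t ht => indicator_of_mem ht _)

theorem HasPrincipalValue.sub_div_le_of_indicator
    (hL : HasPrincipalValue (T.indicator fun _ => 1) L) (hT : MeasurableSet T)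
    (hfin : volume T ≠ ⊤) {α β : ℝ} (hα : 0 < α) (hαβ : α ≤ β) (hαT : T ⊆ Ici α)
    (hT' : Icc α β ⊆ T) : (β - α) / β ≤ L := by
  set φ : ℝ → ℝ := T.indicator fun _ => 1
  have hint : Integrable fun t => φ t / t := by
    refine integrable_div_of_eq_zero_near_zero
      ((integrable_indicator_iff hT).2 (integrableOn_const hfin)) hα fun t ht => ?_
    exact indicator_of_notMem (fun htT => (hαT htT).not_gt ((le_abs_self t).trans_lt ht)) _
  have hnonneg : ∀ t, 0 ≤ φ t / t := fun t => by
    by_cases ht : t ∈ T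
    · exact div_nonneg (by simp [φ, ht]) (hα.le.trans (hαT ht))
    · simp [φ, ht]
  rw [hL.unique (.of_integrable_div hint)]
  calc (β - α) / β = volume.real (Icc α β) • β⁻¹ := by
        rw [Real.volume_real_Icc_of_le hαβ, smul_eq_mul, div_eq_mul_inv]
    _ ≤ ∫ t in Icc α β, φ t / t := by
        refine setIntegral_ge_of_const_le measurableSet_Icc measure_Icc_lt_top.ne
          (fun t ht => ?_) hint.integrableOn
        rw [show φ t = 1 from indicator_of_mem (hT' ht) _, one_div]
        exact inv_anti₀ (hα.trans_le ht.1) ht.2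
    _ ≤ ∫ t, φ t / t := setIntegral_le_integral hint (ae_of_all _ hnonneg)

end PrincipalValue

section Indicators

/-- The times `t` at which `x - t w₁` lies in `A` and `x - t w₂` lies in `B`: the support of the
integrand of `S_{(w₁,w₂)}(χ_A, χ_B)(x)`. -/
def jointHittingTimes (A B : Set V2) (w1 w2 x : V2) : Set ℝ :=
  {t | x - t • w1 ∈ A ∧ x - t • w2 ∈ B}

variable {A B : Set V2} {w1 w2 x : V2} {L : ℝ}

theorem SPV_iff_hasPrincipalValue {f g : V2 → ℝ} :
    SPV w1 w2 f g x L ↔ HasPrincipalValue (fun t => f (x - t • w1) * g (x - t • w2)) L :=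
  Iff.rfl

theorem SPV_indicator_iff :
    SPV w1 w2 (A.indicator fun _ => 1) (B.indicator fun _ => 1) x L ↔
      HasPrincipalValue ((jointHittingTimes A B w1 w2 x).indicator fun _ => 1) L := by
  have hmul (t : ℝ) : A.indicator (fun _ => (1 : ℝ)) (x - t • w1) *
      B.indicator (fun _ => (1 : ℝ)) (x - t • w2) =
        (jointHittingTimes A B w1 w2 x).indicator (fun _ => 1) t := by
    by_cases h1 : x - t • w1 ∈ A <;> by_cases h2 : x - t • w2 ∈ B <;>
      simp [jointHittingTimes, h1, h2]
  simp only [SPV_iff_hasPrincipalValue, hmul]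

theorem SPV.neg {f g : V2 → ℝ} (hL : SPV w1 w2 f g x L) : SPV (-w1) (-w2) f g x (-L) := by
  rw [SPV_iff_hasPrincipalValue] at hL ⊢
  simpa only [neg_smul, smul_neg] using hL.comp_neg

theorem isCompact_jointHittingTimes (hA : IsCompact A) (hB : IsClosed B) (hw1 : w1 ≠ 0) :
    IsCompact (jointHittingTimes A B w1 w2 x) := by
  have hline : IsClosedEmbedding fun t : ℝ => x - t • w1 :=
    (Homeomorph.subLeft x).isClosedEmbedding.comp (isClosedEmbedding_smul_left hw1)
  exact (hline.isCompact_preimage hA).inter_right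
    (hB.preimage (f := fun t : ℝ => x - t • w2) (by fun_prop))

theorem zero_notMem_frontier_jointHittingTimes (hA : x ∉ frontier A) (hB : x ∉ frontier B) :
    (0 : ℝ) ∉ frontier (jointHittingTimes A B w1 w2 x) := by
  have hline (C : Set V2) (w : V2) (hC : x ∉ frontier C) :
      (0 : ℝ) ∉ frontier ((fun t : ℝ => x - t • w) ⁻¹' C) := fun h0 => hC <| by
    simpa using Continuous.frontier_preimage_subset (by fun_prop) C h0
  intro h0
  rcases frontier_inter_subset _ _ h0 with h | h
  · exact hline A w1 hA h.1
  · exact hline B w2 hB h.2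

theorem ae_exists_SPV_indicator (hA : Convex ℝ A) (hA' : IsCompact A) (hB : Convex ℝ B)
    (hB' : IsClosed B) (hw1 : w1 ≠ 0) (w2 : V2) :
    ∀ᵐ x, ∃ L, SPV w1 w2 (A.indicator fun _ => 1) (B.indicator fun _ => 1) x L := by
  filter_upwards [measure_eq_zero_iff_ae_notMem.1 (hA.addHaar_frontier volume),
    measure_eq_zero_iff_ae_notMem.1 (hB.addHaar_frontier volume)] with x hxA hxB
  have hT := isCompact_jointHittingTimes (w2 := w2) (x := x) hA' hB' hw1
  simpa only [SPV_indicator_iff] using exists_hasPrincipalValue_indicator hT.measurableSet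
    hT.measure_ne_top (zero_notMem_frontier_jointHittingTimes hxA hxB)

end Indicators

section PlaneGeometry

theorem dot2_sub_left (x y z : V2) : dot2 (x - y) z = dot2 x z - dot2 y z := by
  simp only [dot2, Prod.fst_sub, Prod.snd_sub]
  ring

theorem dot2_neg_left (x y : V2) : dot2 (-x) y = -dot2 x y := by
  simp only [dot2, Prod.fst_neg, Prod.snd_neg]
  ring

theorem dot2_smul_left (t : ℝ) (x y : V2) : dot2 (t • x) y = t * dot2 x y := by
  simp only [dot2, Prod.smul_fst, Prod.smul_snd, smul_eq_mul]
  ring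

theorem dot2_smul_right (t : ℝ) (x y : V2) : dot2 x (t • y) = t * dot2 x y := by
  simp only [dot2, Prod.smul_fst, Prod.smul_snd, smul_eq_mul]
  ring

theorem dot2_perp_self (x : V2) : dot2 x (perp x) = 0 := by
  simp only [dot2, perp]
  ring

variable {w1 w2 u : V2} {lam : ℝ}

theorem dot2_perp_ne_zero (hli : LinearIndependent ℝ ![w1, w2]) : dot2 w1 (perp w2) ≠ 0 := by
  intro h
  simp only [dot2, perp] at h
  rw [LinearIndependent.pair_iff] at hli
  have hsum : w2.1 • w1 + (-w1.1) • w2 = 0 := by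
    ext
    · simp [mul_comm]
    · simp only [Prod.snd_add, Prod.smul_snd, smul_eq_mul, Prod.snd_zero]
      linarith
  have hsum' : w2.2 • w1 + (-w1.2) • w2 = 0 := by
    ext
    · simp only [Prod.fst_add, Prod.smul_fst, smul_eq_mul, Prod.fst_zero]
      linarith
    · simp [mul_comm]
  have hw1 : w1 = 0 :=
    Prod.ext (neg_eq_zero.1 (hli _ _ hsum).2) (neg_eq_zero.1 (hli _ _ hsum').2)
  exact one_ne_zero (hli 1 0 (by simp [hw1])).1

theorem dot2_perp_eq_of_sub_eq_smul (h : w1 - w2 = lam • u) :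
    dot2 w1 (perp u) = dot2 w2 (perp u) := by
  rw [← sub_eq_zero, ← dot2_sub_left, h, dot2_smul_left, dot2_perp_self, mul_zero]

theorem mul_dot2_perp_of_sub_eq_smul (h : w1 - w2 = lam • u) :
    lam * dot2 w1 (perp u) = -dot2 w1 (perp w2) := by
  have hfst : w1.1 - w2.1 = lam * u.1 := congrArg Prod.fst h
  have hsnd : w1.2 - w2.2 = lam * u.2 := congrArg Prod.snd h
  simp only [dot2, perp]
  linear_combination w1.1 * hsnd - w1.2 * hfst

theorem exists_pos_forall_mul_abs_dot2_le (hli : LinearIndependent ℝ ![w1, w2]) :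
    ∃ k : ℝ, 0 < k ∧ k ≤ 1 ∧ ∀ (u : V2) (lam : ℝ), w1 - w2 = lam • u →
      dot2 w1 (perp u) ≠ 0 ∧ 8 * k * |dot2 w1 u| ≤ |dot2 w1 (perp u)| ∧
        8 * k * |dot2 w2 u| ≤ |dot2 w1 (perp u)| := by
  set D := |dot2 w1 (perp w2)|
  set A1 := |dot2 w1 (w1 - w2)|
  set A2 := |dot2 w2 (w1 - w2)|
  have hD : 0 < D := abs_pos.2 (dot2_perp_ne_zero hli)
  have hA1 : 0 ≤ A1 := abs_nonneg _
  have hA2 : 0 ≤ A2 := abs_nonneg _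
  refine ⟨D / (8 * (D + A1 + A2)), by positivity, ?_, fun u lam hlam => ?_⟩
  · rw [div_le_one (by positivity)]
    linarith
  -- After multiplication by `lam` neither side of the claimed bounds depends on `u`.
  have hdot (w : V2) : |dot2 w (w1 - w2)| = |lam| * |dot2 w u| := by
    rw [hlam, dot2_smul_right, abs_mul]
  have hdet : D = |lam| * |dot2 w1 (perp u)| := by
    rw [← abs_mul, mul_dot2_perp_of_sub_eq_smul hlam, abs_neg]
  have hlam0 : 0 < |lam| := pos_of_mul_pos_left (hdet ▸ hD) (abs_nonneg _)
  have hslope (w : V2) (hw : |dot2 w (w1 - w2)| ≤ D + A1 + A2) :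
      8 * (D / (8 * (D + A1 + A2))) * |dot2 w u| ≤ |dot2 w1 (perp u)| := by
    refine le_of_mul_le_mul_left ?_ hlam0
    calc |lam| * (8 * (D / (8 * (D + A1 + A2))) * |dot2 w u|)
        = D * (|dot2 w (w1 - w2)| / (D + A1 + A2)) := by
          rw [hdot]
          field_simp
      _ ≤ D * 1 := by
          gcongr
          exact div_le_one_of_le₀ hw (by positivity)
      _ = |lam| * |dot2 w1 (perp u)| := by rw [mul_one, hdet]
  exact ⟨fun h0 => hD.ne' (by rw [hdet, h0, abs_zero, mul_zero]), hslope w1 (by linarith),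
    hslope w2 (by linarith)⟩

end PlaneGeometry

section Rectangles

variable {c u : V2} {l1 l2 : ℝ}

theorem isCompact_rectSet (c u : V2) (l1 l2 : ℝ) : IsCompact (rectSet c u l1 l2) := by
  have himage : rectSet c u l1 l2 =
      (fun p : ℝ × ℝ => c + p.1 • u + p.2 • perp u) '' (Icc 0 l1 ×ˢ Icc 0 l2) := by
    ext x
    simp [rectSet, and_assoc, and_left_comm, eq_comm]
  rw [himage]
  exact (isCompact_Icc.prod isCompact_Icc).image (by fun_prop)

theorem convex_rectSet (c u : V2) (l1 l2 : ℝ) : Convex ℝ (rectSet c u l1 l2) := by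
  rintro _ ⟨s, t, hs, ht, rfl⟩ _ ⟨s', t', hs', ht', rfl⟩ a b ha hb hab
  refine ⟨a • s + b • s', a • t + b • t', convex_Icc 0 l1 hs hs' ha hb hab,
    convex_Icc 0 l2 ht ht' ha hb hab, ?_⟩
  calc a • (c + s • u + t • perp u) + b • (c + s' • u + t' • perp u)
      = (a + b) • c + (a • s + b • s') • u + (a • t + b • t') • perp u := by module
    _ = c + (a • s + b • s') • u + (a • t + b • t') • perp u := by rw [hab, one_smul]

/-- The coordinates of `x` along the sides `u` and `perp u` of a rectangle with corner `c`. -/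
def rectCoord (c u x : V2) : ℝ × ℝ := (dot2 (x - c) u, dot2 (x - c) (perp u))

theorem rectCoord_sub_smul (c u x w : V2) (t : ℝ) :
    rectCoord c u (x - t • w) =
      ((rectCoord c u x).1 - t * dot2 w u, (rectCoord c u x).2 - t * dot2 w (perp u)) := by
  simp only [rectCoord, dot2_sub_left, dot2_smul_left]
  ext <;> ring

theorem mem_rectSet_iff (hu : dot2 u u = 1) {x : V2} :
    x ∈ rectSet c u l1 l2 ↔ rectCoord c u x ∈ Icc 0 l1 ×ˢ Icc 0 l2 := by
  simp only [dot2] at hu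
  constructor
  · rintro ⟨s, t, hs, ht, rfl⟩
    have hcoord : rectCoord c u (c + s • u + t • perp u) = (s, t) := by
      ext <;> simp only [rectCoord, dot2, perp, Prod.fst_sub, Prod.snd_sub, Prod.fst_add,
        Prod.snd_add, Prod.smul_fst, Prod.smul_snd, smul_eq_mul]
      · linear_combination s * hu
      · linear_combination t * hu
    rw [hcoord]
    exact ⟨hs, ht⟩
  · rintro ⟨hs, ht⟩
    refine ⟨_, _, hs, ht, ?_⟩
    ext <;> simp only [rectCoord, dot2, perp, Prod.fst_sub, Prod.snd_sub, Prod.fst_add,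
      Prod.snd_add, Prod.smul_fst, Prod.smul_snd, smul_eq_mul]
    · linear_combination (c.1 - x.1) * hu
    · linear_combination (c.2 - x.2) * hu

theorem measurePreserving_rectCoord (c : V2) (hu : dot2 u u = 1) :
    MeasurePreserving (rectCoord c u) := by
  let f : V2 →ₗ[ℝ] V2 := Matrix.toLin (.finTwoProd ℝ) (.finTwoProd ℝ) !![u.1, u.2; -u.2, u.1]
  have hdet : LinearMap.det f = 1 := by
    rw [LinearMap.det_toLin, Matrix.det_fin_two_of, ← hu, dot2]
    ring
  have hf : MeasurePreserving f := by
    refine ⟨f.continuous_of_finiteDimensional.measurable, ?_⟩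
    rw [Measure.map_linearMap_addHaar_eq_smul_addHaar _ (by simp [hdet]), hdet]
    simp
  have heq : rectCoord c u = f ∘ fun x => x - c := by
    ext x <;> simp only [rectCoord, f, dot2, perp, Function.comp_apply,
      Matrix.toLin_finTwoProd_apply] <;> ring
  rw [heq]
  exact hf.comp (measurePreserving_sub_right volume c)

end Rectangles

theorem mul_log_one_add_div_le_min {a b : ℝ} (ha : 0 < a) (hb : 0 < b) :
    b * Real.log (1 + a / b) ≤ 2 * (min a b * Real.log (1 + a / min a b)) := by
  rcases le_total a b with hab | hba
  · rw [min_eq_left hab, div_self ha.ne']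
    calc b * Real.log (1 + a / b) ≤ b * (a / b) := by
          gcongr
          linarith [Real.log_le_sub_one_of_pos (by positivity : 0 < 1 + a / b)]
      _ = a * 1 := by rw [mul_div_cancel₀ _ hb.ne', mul_one]
      _ ≤ a * (2 * Real.log (1 + 1)) := by
          gcongr
          rw [one_add_one_eq_two]
          linarith [Real.log_two_gt_d9]
      _ = 2 * (a * Real.log (1 + 1)) := by ring
  · rw [min_eq_right hba]
    have hlog : 0 ≤ Real.log (1 + a / b) := Real.log_nonneg (by linarith [div_pos ha hb])
    linarith [mul_nonneg hb.le hlog]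

section LowerBound

variable {c u w w1 w2 x : V2} {l1 l2 q s η σ : ℝ}

theorem sub_smul_mem_rectSet (hu : dot2 u u = 1) (hs : 0 < s) (hη : η ≤ l2)
    (hq : 0 < q) (hw : dot2 w (perp u) = q) (hslope : (s + η) * |dot2 w u| ≤ l1 / 4 * q)
    (hx1 : (rectCoord c u x).1 ∈ Icc (l1 / 4) (3 * l1 / 4))
    (hx2 : (rectCoord c u x).2 = l2 + s) {t : ℝ} (ht : t ∈ Icc (s / q) ((s + η) / q)) :
    x - t • w ∈ rectSet c u l1 l2 := by
  have hst : s ≤ t * q := (div_le_iff₀ hq).1 ht.1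
  have hts : t * q ≤ s + η := (le_div_iff₀ hq).1 ht.2
  have hdrift : |t * dot2 w u| ≤ l1 / 4 := by
    rw [abs_mul, abs_of_pos ((div_pos hs hq).trans_le ht.1)]
    calc t * |dot2 w u| ≤ (s + η) / q * |dot2 w u| := by gcongr; exact ht.2
      _ = (s + η) * |dot2 w u| / q := div_mul_eq_mul_div _ _ _
      _ ≤ l1 / 4 := (div_le_iff₀ hq).2 hslope
  obtain ⟨hleft, hright⟩ := abs_le.1 hdrift
  rw [mem_rectSet_iff hu, rectCoord_sub_smul, hw, hx2]
  exact ⟨⟨by linarith [hx1.1], by linarith [hx1.2]⟩, by linarith, by linarith⟩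

theorem div_add_le_of_SPV_rectSet (hu : dot2 u u = 1) (hη : η ∈ Icc 0 l2) (hs : 0 < s)
    (hq : 0 < q) (hw1 : dot2 w1 (perp u) = q) (hw2 : dot2 w2 (perp u) = q)
    (hslope1 : (s + η) * |dot2 w1 u| ≤ l1 / 4 * q) (hslope2 : (s + η) * |dot2 w2 u| ≤ l1 / 4 * q)
    (hx1 : (rectCoord c u x).1 ∈ Icc (l1 / 4) (3 * l1 / 4))
    (hx2 : (rectCoord c u x).2 = l2 + s) {L : ℝ}
    (hL : SPV w1 w2 ((rectSet c u l1 l2).indicator fun _ => 1)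
      ((rectSet c u l1 l2).indicator fun _ => 1) x L) :
    η / (s + η) ≤ L := by
  have hw1_ne : w1 ≠ 0 := by
    rintro rfl
    exact hq.ne (by simpa [dot2] using hw1)
  have hR := isCompact_rectSet c u l1 l2
  have hT := isCompact_jointHittingTimes (w2 := w2) (x := x) hR hR.isClosed hw1_ne
  have hentry : jointHittingTimes (rectSet c u l1 l2) (rectSet c u l1 l2) w1 w2 x ⊆
      Ici (s / q) := fun t ht => by
    have hheight := ((mem_rectSet_iff hu).1 ht.1).2.2
    rw [rectCoord_sub_smul, hw1, hx2] at hheight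
    exact (div_le_iff₀ hq).2 (by linarith)
  have hstay : Icc (s / q) ((s + η) / q) ⊆
      jointHittingTimes (rectSet c u l1 l2) (rectSet c u l1 l2) w1 w2 x := fun t ht =>
    ⟨sub_smul_mem_rectSet hu hs hη.2 hq hw1 hslope1 hx1 hx2 ht,
      sub_smul_mem_rectSet hu hs hη.2 hq hw2 hslope2 hx1 hx2 ht⟩
  have hle : s / q ≤ (s + η) / q := by
    gcongr
    linarith [hη.1]
  calc η / (s + η) = ((s + η) / q - s / q) / ((s + η) / q) := by
        rw [← sub_div, div_div_div_cancel_right₀ hq.ne', add_sub_cancel_left]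
    _ ≤ L := (SPV_indicator_iff.1 hL).sub_div_le_of_indicator hT.measurableSet
        hT.measure_ne_top (div_pos hs hq) hle hentry hstay

theorem lintegral_Ioc_ofReal_div_sub_add (l : ℝ) (hη : 0 < η) (hσ : 0 ≤ σ) :
    ∫⁻ y in Ioc l (l + σ), ENNReal.ofReal (η / (y - l + η)) =
      ENNReal.ofReal (η * Real.log (1 + σ / η)) := by
  have hint : ∫ y in l..(l + σ), η / (y - l + η) = η * Real.log (1 + σ / η) := by
    simp only [div_eq_mul_inv η, sub_add]
    rw [intervalIntegral.integral_const_mul,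
      intervalIntegral.integral_comp_sub_right (fun y : ℝ => y⁻¹),
      integral_inv_of_pos (by linarith) (by linarith)]
    congr 2
    rw [one_add_div hη.ne']
    congr 1 <;> ring
  have hcont : ContinuousOn (fun y => η / (y - l + η)) (Icc l (l + σ)) :=
    ContinuousOn.div (by fun_prop) (by fun_prop) fun y hy => by linarith [hy.1]
  rw [← hint, intervalIntegral.integral_of_le (by linarith),
    ofReal_integral_eq_lintegral_ofReal (hcont.integrableOn_Icc.mono_set Ioc_subset_Icc_self)]
  filter_upwards [ae_restrict_mem measurableSet_Ioc] with y hy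
  exact div_nonneg hη.le (by linarith [hy.1])

theorem ofReal_mul_log_le_lintegral_of_pos (hu : dot2 u u = 1) (hη : η ∈ Ioc 0 l2) (hσ : 0 ≤ σ)
    (hq : 0 < q) (hw1 : dot2 w1 (perp u) = q) (hw2 : dot2 w2 (perp u) = q)
    (hslope1 : (σ + η) * |dot2 w1 u| ≤ l1 / 4 * q) (hslope2 : (σ + η) * |dot2 w2 u| ≤ l1 / 4 * q)
    {g : V2 → ℝ} (hg : ∀ᵐ x, SPV w1 w2 ((rectSet c u l1 l2).indicator fun _ => 1)
      ((rectSet c u l1 l2).indicator fun _ => 1) x (g x)) :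
    ENNReal.ofReal (l1 / 2 * (η * Real.log (1 + σ / η))) ≤ ∫⁻ x, ENNReal.ofReal |g x| := by
  set E : Set (ℝ × ℝ) := Icc (l1 / 4) (3 * l1 / 4) ×ˢ Ioc l2 (l2 + σ)
  have hE : MeasurableSet E := measurableSet_Icc.prod measurableSet_Ioc
  have hcoord := measurePreserving_rectCoord c hu
  have hpointwise : ∀ᵐ x, x ∈ rectCoord c u ⁻¹' E →
      ENNReal.ofReal (η / ((rectCoord c u x).2 - l2 + η)) ≤ ENNReal.ofReal |g x| := by
    filter_upwards [hg] with x hx ⟨hx1, hx2⟩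
    have hslope {w : V2} (hw : (σ + η) * |dot2 w u| ≤ l1 / 4 * q) :
        ((rectCoord c u x).2 - l2 + η) * |dot2 w u| ≤ l1 / 4 * q :=
      le_trans (by gcongr; linarith [hx2.2]) hw
    exact ENNReal.ofReal_le_ofReal <| (div_add_le_of_SPV_rectSet hu ⟨hη.1.le, hη.2⟩
      (sub_pos.2 hx2.1) hq hw1 hw2 (hslope hslope1) (hslope hslope2) hx1 (by ring) hx).trans
      (le_abs_self _)
  have hwidth : volume (Icc (l1 / 4) (3 * l1 / 4)) = ENNReal.ofReal (l1 / 2) := by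
    rw [Real.volume_Icc]
    ring_nf
  calc ENNReal.ofReal (l1 / 2 * (η * Real.log (1 + σ / η)))
      = ∫⁻ p in E, ENNReal.ofReal (η / (p.2 - l2 + η)) := by
        have hlog : 0 ≤ η * Real.log (1 + σ / η) :=
          mul_nonneg hη.1.le (Real.log_nonneg (by linarith [div_nonneg hσ hη.1.le]))
        rw [Measure.volume_eq_prod, setLIntegral_prod _ (by fun_prop)]
        simp only [lintegral_Ioc_ofReal_div_sub_add l2 hη.1 hσ]
        rw [setLIntegral_const, hwidth, ENNReal.ofReal_mul' hlog, mul_comm]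
    _ = ∫⁻ x in rectCoord c u ⁻¹' E, ENNReal.ofReal (η / ((rectCoord c u x).2 - l2 + η)) :=
        (hcoord.setLIntegral_comp_preimage hE
          (f := fun p => ENNReal.ofReal (η / (p.2 - l2 + η))) (by fun_prop)).symm
    _ ≤ ∫⁻ x in rectCoord c u ⁻¹' E, ENNReal.ofReal |g x| :=
        setLIntegral_mono_ae' (hcoord.measurable hE) hpointwise
    _ ≤ ∫⁻ x, ENNReal.ofReal |g x| := setLIntegral_le_lintegral _ _

theorem ofReal_mul_log_le_lintegral (hu : dot2 u u = 1) (hη : η ∈ Ioc 0 l2) (hσ : 0 ≤ σ)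
    (hq : q ≠ 0) (hw1 : dot2 w1 (perp u) = q) (hw2 : dot2 w2 (perp u) = q)
    (hslope1 : (σ + η) * |dot2 w1 u| ≤ l1 / 4 * |q|)
    (hslope2 : (σ + η) * |dot2 w2 u| ≤ l1 / 4 * |q|)
    {g : V2 → ℝ} (hg : ∀ᵐ x, SPV w1 w2 ((rectSet c u l1 l2).indicator fun _ => 1)
      ((rectSet c u l1 l2).indicator fun _ => 1) x (g x)) :
    ENNReal.ofReal (l1 / 2 * (η * Real.log (1 + σ / η))) ≤ ∫⁻ x, ENNReal.ofReal |g x| := by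
  rcases hq.lt_or_gt with hneg | hpos
  · rw [abs_of_neg hneg] at hslope1 hslope2
    simpa only [abs_neg] using ofReal_mul_log_le_lintegral_of_pos (w1 := -w1) (w2 := -w2) hu hη hσ
      (neg_pos.2 hneg) (by rw [dot2_neg_left, hw1]) (by rw [dot2_neg_left, hw2])
      (by rwa [dot2_neg_left, abs_neg]) (by rwa [dot2_neg_left, abs_neg])
      (hg.mono fun _ => SPV.neg)
  · rw [abs_of_pos hpos] at hslope1 hslope2
    exact ofReal_mul_log_le_lintegral_of_pos hu hη hσ hpos hw1 hw2 hslope1 hslope2 hg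

end LowerBound

theorem log_lower_bound_general (w1 w2 : V2) (hli : LinearIndependent ℝ ![w1, w2]) :
    ∃ c : ℝ, 0 < c ∧
      ∀ l1 l2 : ℝ, 0 < l1 → 0 < l2 →
        ∀ cc uu : V2, dot2 uu uu = 1 → (∃ lam : ℝ, w1 - w2 = lam • uu) →
          ∃ g : V2 → ℝ,
            (∀ᵐ x : V2,
              SPV w1 w2 (Set.indicator (rectSet cc uu l1 l2) fun _ => (1 : ℝ))
                (Set.indicator (rectSet cc uu l1 l2) fun _ => (1 : ℝ)) x (g x)) ∧
            ENNReal.ofReal (c * (l1 * l2) * Real.log (1 + l1 / l2)) ≤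
              ∫⁻ x : V2, ENNReal.ofReal |g x| := by
  obtain ⟨k, hk, hk1, hslope⟩ := exists_pos_forall_mul_abs_dot2_le hli
  refine ⟨k / 4, by positivity, fun l1 l2 hl1 hl2 c u hu ⟨lam, hlam⟩ => ?_⟩
  obtain ⟨hq, hslope1, hslope2⟩ := hslope u lam hlam
  have hconv := convex_rectSet c u l1 l2
  have hcomp := isCompact_rectSet c u l1 l2
  obtain ⟨g, hg⟩ := (ae_exists_SPV_indicator hconv hcomp hconv hcomp.isClosed (hli.ne_zero 0)
    w2).choice
  set m := min l1 l2
  have hm : 0 < m := lt_min hl1 hl2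
  have hkm : k * m ≤ l2 := (mul_le_of_le_one_left hm.le hk1).trans (min_le_right _ _)
  have hrescale {p : ℝ} (hp : 8 * k * |p| ≤ |dot2 w1 (perp u)|) :
      (k * l1 + k * m) * |p| ≤ l1 / 4 * |dot2 w1 (perp u)| :=
    calc (k * l1 + k * m) * |p| ≤ (k * l1 + k * l1) * |p| := by gcongr; exact min_le_left _ _
      _ = l1 / 4 * (8 * k * |p|) := by ring
      _ ≤ l1 / 4 * |dot2 w1 (perp u)| := by gcongr
  refine ⟨g, hg, (ENNReal.ofReal_le_ofReal ?_).trans (ofReal_mul_log_le_lintegral hu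
    ⟨mul_pos hk hm, hkm⟩ (by positivity) hq rfl (dot2_perp_eq_of_sub_eq_smul hlam).symm
    (hrescale hslope1) (hrescale hslope2) hg)⟩
  calc k / 4 * (l1 * l2) * Real.log (1 + l1 / l2)
      = k / 4 * l1 * (l2 * Real.log (1 + l1 / l2)) := by ring
    _ ≤ k / 4 * l1 * (2 * (m * Real.log (1 + l1 / m))) :=
        mul_le_mul_of_nonneg_left (mul_log_one_add_div_le_min hl1 hl2) (by positivity)
    _ = l1 / 2 * (k * m * Real.log (1 + k * l1 / (k * m))) := by
        rw [mul_div_mul_left _ _ hk.ne']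
        ring

/-- **Logarithmic lower bound.**  For linearly independent `w₁,w₂` there is
`c > 0` such that for every `ε ∈ (0,1/2)` and every `1 × ε` rectangle `R` with long
side parallel to `w₁ − w₂`, the principal value `S_{(w₁,w₂)}(χ_R,χ_R)(x)` exists for
a.e. `x` and `∫ |S_{(w₁,w₂)}(χ_R,χ_R)| ≥ c ε log(1/ε)`. -/
theorem log_lower_bound (w1 w2 : V2) (hli : LinearIndependent ℝ ![w1, w2]) :
    ∃ c : ℝ, 0 < c ∧
      ∀ ε : ℝ, 0 < ε → ε < 1 / 2 →
        ∀ cc uu : V2, dot2 uu uu = 1 → (∃ lam : ℝ, w1 - w2 = lam • uu) →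
          ∃ g : V2 → ℝ,
            (∀ᵐ x : V2,
              SPV w1 w2 (Set.indicator (rectSet cc uu 1 ε) fun _ => (1 : ℝ))
                (Set.indicator (rectSet cc uu 1 ε) fun _ => (1 : ℝ)) x (g x)) ∧
            ENNReal.ofReal (c * ε * Real.log (1 / ε)) ≤
              ∫⁻ x : V2, ENNReal.ofReal (|g x|) := by
  obtain ⟨c, hc, h⟩ := log_lower_bound_general w1 w2 hli
  refine ⟨c, hc, fun ε hε _ cc uu hu hlam => (h 1 ε one_pos hε cc uu hu hlam).imp fun g hg =>
    ⟨hg.1, le_trans (ENNReal.ofReal_le_ofReal ?_) hg.2⟩⟩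
  rw [one_mul]
  gcongr
  linarith
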